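/- Let n ≥ 2, 0 < α < n and 1 < s ≤ ∞, and suppose Ω satisfies the L^s-Dini condition D_s. Then there exist constants C > 0 and ϑ ∈ (0, 1/2) such that for every R > 0 and every x ∈ ℝ^n with |x| < ϑR, (∫_{R ≤ |z| < 2R} | Ω(z−x)/|z−x|^{n−α} − Ω(z)/|z|^{n−α} |^s dz)^{1/s} ≤ C R^{n/s − (n−α)} ( |x|/R + ∫_{|x|/(2R)}^{|x|/R} ω_s(δ)/δ dδ ), where C is independent of R and x (for s = ∞ the left-hand side is the essential supremum over R ≤ |z| < 2R and n/s = 0). -/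

import Mathlib

noncomputable section

open MeasureTheory Metric Set
open scoped ENNReal

abbrev En (n : ℕ) : Type := EuclideanSpace ℝ (Fin n)

/-- `Ω` is homogeneous of degree zero. -/
def HomZero {n : ℕ} (Ω : En n → ℝ) : Prop :=
  ∀ t : ℝ, 0 < t → ∀ x : En n, x ≠ 0 → Ω (t • x) = Ω x

/-- Surface measure on the unit sphere `S^{n-1}`. -/
noncomputable def sphereMeasure (n : ℕ) : Measure (sphere (0 : En n) 1) :=
  (volume : Measure (En n)).toSphere

/-- The `L^s(S^{n-1})` norm of `Ω` (essential supremum when `s = ∞`). -/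
noncomputable def sphereLpNorm {n : ℕ} (s : ℝ≥0∞) (Ω : En n → ℝ) : ℝ≥0∞ :=
  eLpNorm (fun x : sphere (0 : En n) 1 => Ω (x : En n)) s (sphereMeasure n)

/-- `‖ρ - I‖ = sup_{x' ∈ S^{n-1}} |ρ x' - x'|`. -/
noncomputable def rotNorm {n : ℕ} (ρ : En n ≃ₗᵢ[ℝ] En n) : ℝ :=
  ⨆ x : sphere (0 : En n) 1, ‖ρ (x : En n) - (x : En n)‖

/-- `ρ ∈ SO(n)`: a linear isometry with determinant one. -/
def IsRotation {n : ℕ} (ρ : En n ≃ₗᵢ[ℝ] En n) : Prop :=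
  LinearMap.det (ρ.toLinearEquiv : En n →ₗ[ℝ] En n) = 1

/-- The integral modulus of continuity `ω_s(δ)` of `Ω` of order `s`
(essential-sup version when `s = ∞`). -/
noncomputable def modCont {n : ℕ} (s : ℝ≥0∞) (Ω : En n → ℝ) (δ : ℝ) : ℝ :=
  (⨆ ρ : {ρ : En n ≃ₗᵢ[ℝ] En n // IsRotation ρ ∧ rotNorm ρ < δ},
    eLpNorm (fun x : sphere (0 : En n) 1 => Ω (ρ.1 (x : En n)) - Ω (x : En n)) s
      (sphereMeasure n)).toReal

/-- The `L^{s;β}`-Dini smoothness condition `D_{s;β}`. -/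
def DiniCond {n : ℕ} (s : ℝ≥0∞) (β : ℝ) (Ω : En n → ℝ) : Prop :=
  HomZero Ω ∧ sphereLpNorm s Ω ≠ ⊤ ∧
    IntegrableOn (fun δ : ℝ => modCont s Ω δ / δ ^ (1 + β)) (Ioo (0 : ℝ) 1)

/-- The homogeneous fractional integral operator `T_{Ω,α}`. -/
noncomputable def T {n : ℕ} (Ω : En n → ℝ) (α : ℝ) (f : En n → ℝ) (x : En n) : ℝ :=
  ∫ y, Ω (x - y) * ‖x - y‖ ^ (α - (n : ℝ)) * f y

/-- Conjugate exponent of `s ∈ (1,∞]`, with `∞' = 1`. -/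
noncomputable def conj (s : ℝ≥0∞) : ℝ := if s = ⊤ then 1 else s.toReal / (s.toReal - 1)

/-- Conjugate exponent of a real exponent `t`. -/
noncomputable def rconj (t : ℝ) : ℝ := t / (t - 1)

/-- A weight: a locally integrable a.e. positive function. -/
def IsWeight {n : ℕ} (ω : En n → ℝ) : Prop :=
  LocallyIntegrable ω volume ∧ ∀ᵐ x : En n, 0 < ω x

/-- The Muckenhoupt–Wheeden class `A(t, ∞)`. -/
def MemArInfty {n : ℕ} (ω : En n → ℝ) (t : ℝ) : Prop :=
  ∃ C > 0, ∀ (x₀ : En n) (r : ℝ), 0 < r →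
    essSup ω (volume.restrict (ball x₀ r)) *
      (⨍ x in ball x₀ r, ω x ^ (-(rconj t))) ^ (1 / rconj t) ≤ C

/-- The Muckenhoupt–Wheeden class `A(u, t)` (with the `ess sup` convention when `u = 1`). -/
def MemArt {n : ℕ} (ω : En n → ℝ) (u t : ℝ) : Prop :=
  ∃ C > 0, ∀ (x₀ : En n) (r : ℝ), 0 < r →
    (⨍ x in ball x₀ r, ω x ^ t) ^ (1 / t) *
      (if u = 1 then essSup (fun x => (ω x)⁻¹) (volume.restrict (ball x₀ r))
       else (⨍ x in ball x₀ r, ω x ^ (-(rconj u))) ^ (1 / rconj u)) ≤ C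

/-- The weighted Lebesgue norm `‖f‖_{L^p(ω^p)}`. -/
noncomputable def wLpNorm {n : ℕ} (p : ℝ) (ω f : En n → ℝ) : ℝ :=
  (∫ x, |f x| ^ p * ω x ^ p) ^ (1 / p)

/-- `f ∈ L^p(ω^p)`. -/
def MemWLp {n : ℕ} (p : ℝ) (ω f : En n → ℝ) : Prop :=
  Measurable f ∧ Integrable (fun x => |f x| ^ p * ω x ^ p)

/-- The set of ball quantities defining the weighted Morrey norm `M^{p,κ}(ω₁, ν)`. -/
def morreySet {n : ℕ} (p κ : ℝ) (ω₁ ν f : En n → ℝ) : Set ℝ :=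
  {c | ∃ (x₀ : En n) (r : ℝ), 0 < r ∧
    c = ((∫ x in ball x₀ r, ν x) ^ (-κ) * ∫ x in ball x₀ r, |f x| ^ p * ω₁ x) ^ (1 / p)}

/-- The weighted Morrey norm `‖f‖_{M^{p,κ}(ω₁, ν)}`. -/
noncomputable def morreyNorm {n : ℕ} (p κ : ℝ) (ω₁ ν f : En n → ℝ) : ℝ :=
  sSup (morreySet p κ ω₁ ν f)

/-- `f ∈ M^{p,κ}(ω₁, ν)`, i.e. `‖f‖_{M^{p,κ}(ω₁,ν)} < ∞`. -/
def MemMorrey {n : ℕ} (p κ : ℝ) (ω₁ ν f : En n → ℝ) : Prop :=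
  Measurable f ∧
  (∀ (x₀ : En n) (r : ℝ), 0 < r → IntegrableOn (fun x => |f x| ^ p * ω₁ x) (ball x₀ r)) ∧
  BddAbove (morreySet p κ ω₁ ν f)

/-!
For vectors `m` near a unit vector `e`, the product `R_m R_e` of the reflections in the lines they
span is a rotation within `8 ‖m - e‖` of the identity, so `Ω (R_m R_e z) - Ω z` is controlled by
`ω_s`. A translate of `z` is not a rotation of `z`, but `Ω` sees only directions, and `w` near `z`
has the direction of `R_m R_e z` when `m` spans the bisector of `R_e z` and `w`. The map `w ↦ m` is
bi-Lipschitz for `z` in a narrow cone around `e`, hence the mean of `Ω (z + u) - Ω z` over small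
translations `u` is dominated by a mean over the rotations `R_m R_e`. For each small `y` there is
then a `u` for which the differences for `u` and for `u - y` are both at most a constant times the
mean, and together they bound the difference for `y`. Writing the translation by `-x` as 256 equal
small ones brings the argument of `ω_s` down to `‖x‖ / 2`, where the monotonicity of `ω_s` bounds it
by twice the integral. The smooth factor `|z| ^ (α - n)` accounts for the term `|x| / R`.
-/

open scoped NNReal

section LineReflections

open Submodule

variable {E : Type*} [NormedAddCommGroup E] [InnerProductSpace ℝ E]

theorem norm_normalize_le_one (m : E) : ‖NormedSpace.normalize m‖ ≤ 1 := by
  rcases eq_or_ne m 0 with rfl | hm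
  · simp
  · exact (NormedSpace.norm_normalize hm).le

theorem norm_normalize_sub_le {e : E} (he : ‖e‖ = 1) (m : E) :
    ‖NormedSpace.normalize m - e‖ ≤ 2 * ‖m - e‖ := by
  rcases eq_or_ne m 0 with rfl | hm
  · simp [he]
  have hrescale : ‖NormedSpace.normalize m - m‖ ≤ ‖m - e‖ := by
    calc ‖NormedSpace.normalize m - m‖ = ‖(1 - ‖m‖) • NormedSpace.normalize m‖ := by
          rw [sub_smul, one_smul, NormedSpace.norm_smul_normalize]
      _ = |‖e‖ - ‖m‖| := by
          rw [norm_smul, NormedSpace.norm_normalize hm, mul_one, he, Real.norm_eq_abs]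
      _ ≤ ‖m - e‖ := norm_sub_rev e m ▸ abs_norm_sub_norm_le e m
  linarith [norm_sub_le_norm_sub_add_norm_sub (NormedSpace.normalize m) m e]

theorem reflection_singleton_eq_normalize (m v : E) :
    (ℝ ∙ m).reflection v =
      (2 * inner ℝ (NormedSpace.normalize m) v) • NormedSpace.normalize m - v := by
  rw [reflection_singleton_apply, NormedSpace.normalize, real_inner_smul_left, smul_smul,
    ← Nat.cast_smul_eq_nsmul ℝ, smul_smul]
  congr 2
  simp only [RCLike.ofReal_real_eq_id, id_eq, Nat.cast_ofNat]
  ring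

theorem norm_reflection_singleton_sub_le {e : E} (he : ‖e‖ = 1) (m v : E) :
    ‖(ℝ ∙ m).reflection v - (ℝ ∙ e).reflection v‖ ≤ 8 * ‖m - e‖ * ‖v‖ := by
  set a := NormedSpace.normalize m
  have hdiff : (ℝ ∙ m).reflection v - (ℝ ∙ e).reflection v =
      (2 : ℝ) • (inner ℝ (a - e) v • a + inner ℝ e v • (a - e)) := by
    rw [reflection_singleton_eq_normalize, reflection_singleton_eq_normalize e,
      NormedSpace.normalize_eq_self_of_norm_eq_one he, inner_sub_left]
    module
  have hfst : ‖inner ℝ (a - e) v • a‖ ≤ ‖a - e‖ * ‖v‖ := by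
    rw [norm_smul, ← mul_one (‖a - e‖ * ‖v‖)]
    gcongr
    · exact norm_inner_le_norm _ _
    · exact norm_normalize_le_one m
  have hsnd : ‖inner ℝ e v • (a - e)‖ ≤ ‖a - e‖ * ‖v‖ := by
    rw [norm_smul, mul_comm]
    gcongr
    simpa only [he, one_mul] using norm_inner_le_norm (𝕜 := ℝ) e v
  calc ‖(ℝ ∙ m).reflection v - (ℝ ∙ e).reflection v‖
      ≤ 2 * (‖a - e‖ * ‖v‖ + ‖a - e‖ * ‖v‖) := by
        rw [hdiff, norm_smul, Real.norm_two]
        gcongr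
        exact (norm_add_le _ _).trans (add_le_add hfst hsnd)
    _ = 4 * ‖a - e‖ * ‖v‖ := by ring
    _ ≤ 4 * (2 * ‖m - e‖) * ‖v‖ := by gcongr; exact norm_normalize_sub_le he m
    _ = 8 * ‖m - e‖ * ‖v‖ := by ring

theorem det_reflection_singleton_eq [FiniteDimensional ℝ E] {m e : E} (hm : m ≠ 0) (he : e ≠ 0) :
    LinearMap.det (ℝ ∙ m).reflection.toLinearMap =
      LinearMap.det (ℝ ∙ e).reflection.toLinearMap := by
  have hfinrank {u : E} (hu : u ≠ 0) :
      1 + Module.finrank ℝ (ℝ ∙ u)ᗮ = Module.finrank ℝ E := by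
    rw [← finrank_span_singleton (K := ℝ) hu, finrank_add_finrank_orthogonal]
  rw [det_reflection, det_reflection,
    add_left_cancel ((hfinrank hm).trans (hfinrank he).symm)]

theorem isRotation_reflection_trans_reflection {n : ℕ} {m e : En n} (hm : m ≠ 0) (he : e ≠ 0) :
    IsRotation ((ℝ ∙ e).reflection.trans (ℝ ∙ m).reflection) := by
  have hcomp : (((ℝ ∙ e).reflection.trans (ℝ ∙ m).reflection).toLinearEquiv : En n →ₗ[ℝ] En n) =
      (ℝ ∙ m).reflection.toLinearMap ∘ₗ (ℝ ∙ e).reflection.toLinearMap := rfl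
  rw [IsRotation, hcomp, LinearMap.det_comp, det_reflection_singleton_eq hm he, det_reflection,
    ← mul_pow]
  norm_num

theorem rotNorm_reflection_trans_reflection_le {n : ℕ} {e : En n} (he : ‖e‖ = 1) (m : En n) :
    rotNorm ((ℝ ∙ e).reflection.trans (ℝ ∙ m).reflection) ≤ 8 * ‖m - e‖ := by
  refine Real.iSup_le (fun ζ => ?_) (by positivity)
  simpa using norm_reflection_singleton_sub_le he m ((ℝ ∙ e).reflection (ζ : En n))

theorem measurable_reflection_singleton [MeasurableSpace E] [BorelSpace E]
    [SecondCountableTopology E] :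
    Measurable fun p : E × E => (ℝ ∙ p.1).reflection p.2 := by
  simp only [reflection_singleton_eq_normalize, NormedSpace.normalize]
  fun_prop

end LineReflections

section Bisector

open Submodule

variable {E : Type*} [NormedAddCommGroup E] [InnerProductSpace ℝ E]

/-- A vector spanning the bisector of the angle between `u` and `w`: the reflection in its line
exchanges the directions of `u` and `w`. As a function of `w` it inverts, up to normalization, the
map sending a line to the image of `u` under the reflection in that line. -/
def bisector (u w : E) : E := ‖u‖ • w + ‖w‖ • u

theorem reflection_bisector (u w : E) :
    (ℝ ∙ bisector u w).reflection (‖w‖ • u) = ‖u‖ • w := by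
  have hnorm : ‖‖w‖ • u‖ = ‖-(‖u‖ • w)‖ := by
    rw [norm_neg, norm_smul, norm_smul, norm_norm, norm_norm, mul_comm]
  have h := reflection_sub hnorm
  rw [sub_neg_eq_add, add_comm, ← bisector, reflection_orthogonal_apply] at h
  exact neg_injective h

theorem norm_bisector_sub_le (u w v : E) :
    ‖bisector u w - bisector u v‖ ≤ 2 * ‖u‖ * ‖w - v‖ := by
  calc ‖bisector u w - bisector u v‖ = ‖‖u‖ • (w - v) + (‖w‖ - ‖v‖) • u‖ := by
        congr 1; simp only [bisector]; module
    _ ≤ ‖u‖ * ‖w - v‖ + |‖w‖ - ‖v‖| * ‖u‖ := by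
        refine (norm_add_le _ _).trans_eq ?_
        rw [norm_smul, norm_smul, norm_norm, Real.norm_eq_abs]
    _ ≤ ‖u‖ * ‖w - v‖ + ‖w - v‖ * ‖u‖ := by gcongr; exact abs_norm_sub_norm_le w v
    _ = 2 * ‖u‖ * ‖w - v‖ := by ring

theorem abs_norm_sub_norm_mul_le_norm_bisector_sub {u w v : E}
    (hw : 0 ≤ inner ℝ u w) (hv : 0 ≤ inner ℝ u v) :
    |‖w‖ - ‖v‖| * ‖u‖ ≤ ‖bisector u w - bisector u v‖ := by
  set q := bisector u w - bisector u v with hq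
  rcases (add_nonneg (norm_nonneg w) (norm_nonneg v)).eq_or_lt with h0 | hpos
  · have hzero : ‖w‖ - ‖v‖ = 0 := by linarith [norm_nonneg w, norm_nonneg v]
    simp [hzero]
  have hinner : (‖w‖ - ‖v‖) * (‖u‖ * (‖w‖ + ‖v‖) + inner ℝ u (w + v)) = inner ℝ q (w + v) := by
    simp only [hq, bisector, inner_sub_left, inner_add_left, inner_add_right,
      real_inner_smul_left, real_inner_self_eq_norm_sq]
    rw [real_inner_comm w v]
    ring
  have hsum : 0 ≤ inner ℝ u (w + v) := by rw [inner_add_right]; positivity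
  refine le_of_mul_le_mul_right ?_ hpos
  calc |‖w‖ - ‖v‖| * ‖u‖ * (‖w‖ + ‖v‖)
      ≤ |‖w‖ - ‖v‖| * (‖u‖ * (‖w‖ + ‖v‖) + inner ℝ u (w + v)) := by
        rw [mul_assoc]; gcongr; linarith
    _ = |inner ℝ q (w + v)| := by rw [← hinner, abs_mul, abs_of_nonneg (a := _ + _) (by positivity)]
    _ ≤ ‖q‖ * ‖w + v‖ := abs_real_inner_le_norm _ _
    _ ≤ ‖q‖ * (‖w‖ + ‖v‖) := by gcongr; exact norm_add_le _ _

theorem norm_mul_norm_sub_le_norm_bisector_sub {u w v : E}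
    (hw : 0 ≤ inner ℝ u w) (hv : 0 ≤ inner ℝ u v) :
    ‖u‖ * ‖w - v‖ ≤ 2 * ‖bisector u w - bisector u v‖ := by
  calc ‖u‖ * ‖w - v‖ = ‖(bisector u w - bisector u v) - (‖w‖ - ‖v‖) • u‖ := by
        rw [← norm_norm u, ← norm_smul]
        congr 1; simp only [bisector]; module
    _ ≤ ‖bisector u w - bisector u v‖ + |‖w‖ - ‖v‖| * ‖u‖ := by
        refine (norm_sub_le _ _).trans_eq ?_
        rw [norm_smul, Real.norm_eq_abs]
    _ ≤ 2 * ‖bisector u w - bisector u v‖ := by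
        linarith [abs_norm_sub_norm_mul_le_norm_bisector_sub hw hv]

end Bisector

section ChangeOfVariables

open Measure Module

variable {E : Type*} [NormedAddCommGroup E] [NormedSpace ℝ E] [FiniteDimensional ℝ E]
  [MeasurableSpace E] [BorelSpace E] (μ : Measure E) [μ.IsAddHaarMeasure]

theorem map_restrict_le_of_antilipschitz {f : E → E} {s t : Set E} {K : ℝ≥0}
    (hf : Measurable f) (hK : AntilipschitzWith K (s.domRestrict f)) (hst : MapsTo f s t) :
    (μ.restrict s).map f ≤ (K : ℝ≥0∞) ^ finrank ℝ E • μ.restrict t := by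
  refine le_iff.2 fun B hB => ?_
  have hpre : f ⁻¹' B ∩ s ⊆ (↑) '' (s.domRestrict f ⁻¹' (B ∩ t)) := fun x hx =>
    ⟨⟨x, hx.2⟩, ⟨hx.1, hst hx.2⟩, rfl⟩
  have hhaus : μH[finrank ℝ E] (f ⁻¹' B ∩ s) ≤
      (K : ℝ≥0∞) ^ finrank ℝ E * μH[finrank ℝ E] (B ∩ t) := by
    refine (measure_mono hpre).trans ?_
    rw [isometry_subtype_coe.hausdorffMeasure_image (.inl (Nat.cast_nonneg _))]
    exact_mod_cast hK.hausdorffMeasure_preimage_le (Nat.cast_nonneg _) (B ∩ t)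
  rw [map_apply hf hB, restrict_apply (hf hB), Measure.smul_apply, restrict_apply hB,
    smul_eq_mul, isAddLeftInvariant_eq_smul μ μH[finrank ℝ E], Measure.smul_apply,
    Measure.smul_apply, mul_smul_comm]
  gcongr

theorem setLIntegral_comp_le_of_antilipschitz {f : E → E} {s t : Set E} {K : ℝ≥0}
    (hf : Measurable f) (hK : AntilipschitzWith K (s.domRestrict f)) (hst : MapsTo f s t)
    {g : E → ℝ≥0∞} (hg : Measurable g) :
    ∫⁻ x in s, g (f x) ∂μ ≤ (K : ℝ≥0∞) ^ finrank ℝ E * ∫⁻ y in t, g y ∂μ := by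
  rw [← lintegral_map hg hf]
  exact (lintegral_mono' (map_restrict_le_of_antilipschitz μ hf hK hst) le_rfl).trans_eq
    (lintegral_smul_measure _ _)

end ChangeOfVariables

section SphereMeasure

open Measure Module Pointwise

variable {E : Type*} [NormedAddCommGroup E] [NormedSpace ℝ E]

theorem normalize_linearIsometryEquiv_apply (ρ : E ≃ₗᵢ[ℝ] E) (v : E) :
    NormedSpace.normalize (ρ v) = ρ (NormedSpace.normalize v) := by
  simp only [NormedSpace.normalize, map_smul, ρ.norm_map]

theorem Ioo_smul_coe_preimage_sphere (S : Set E) :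
    Ioo (0 : ℝ) 1 • ((↑) '' ((↑) ⁻¹' S : Set (sphere (0 : E) 1)) : Set E) =
      NormedSpace.normalize ⁻¹' S ∩ (ball 0 1 \ {0}) := by
  ext v
  simp only [mem_smul, Subtype.image_preimage_coe, mem_inter_iff, mem_preimage, mem_sdiff,
    mem_ball_zero_iff, mem_singleton_iff, mem_sphere_zero_iff_norm]
  constructor
  · rintro ⟨t, ht, y, ⟨hy, hyS⟩, rfl⟩
    have hy0 : y ≠ 0 := norm_ne_zero_iff.1 (by rw [hy]; exact one_ne_zero)
    rw [NormedSpace.normalize_smul_of_pos ht.1, NormedSpace.normalize_eq_self_of_norm_eq_one hy,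
      norm_smul, hy, mul_one, Real.norm_of_nonneg ht.1.le]
    exact ⟨hyS, ht.2, smul_ne_zero ht.1.ne' hy0⟩
  · rintro ⟨hS, hlt, h0⟩
    exact ⟨‖v‖, ⟨norm_pos_iff.2 h0, hlt⟩, NormedSpace.normalize v,
      ⟨NormedSpace.norm_normalize h0, hS⟩, NormedSpace.norm_smul_normalize v⟩

variable [MeasurableSpace E] [BorelSpace E] [SecondCountableTopology E] (μ : Measure E)

theorem measurable_normalize : Measurable (NormedSpace.normalize : E → E) := by
  unfold NormedSpace.normalize
  fun_prop

theorem map_coe_toSphere :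
    μ.toSphere.map (↑) =
      finrank ℝ E • (μ.restrict (ball 0 1 \ {0})).map NormedSpace.normalize := by
  ext S hS
  rw [map_apply measurable_subtype_coe hS, toSphere_apply' _ (measurable_subtype_coe hS),
    Ioo_smul_coe_preimage_sphere, Measure.smul_apply, map_apply measurable_normalize hS,
    restrict_apply (measurable_normalize hS), nsmul_eq_mul]

theorem measurePreserving_map_coe_toSphere {ρ : E ≃ₗᵢ[ℝ] E} (hρ : MeasurePreserving ρ μ μ) :
    MeasurePreserving ρ (μ.toSphere.map (↑)) (μ.toSphere.map (↑)) := by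
  have hcomm : ρ ∘ NormedSpace.normalize = NormedSpace.normalize ∘ ρ :=
    funext fun v => (normalize_linearIsometryEquiv_apply ρ v).symm
  have hpre : ρ ⁻¹' (ball 0 1 \ {0}) = ball 0 1 \ {0} := by
    ext v
    simp
  have hrestrict := hρ.restrict_preimage (measurableSet_ball.diff (measurableSet_singleton 0)
    (s₁ := ball (0 : E) 1))
  refine ⟨hρ.measurable, ?_⟩
  rw [map_coe_toSphere, Measure.map_smul, map_map hρ.measurable measurable_normalize, hcomm,
    ← map_map measurable_normalize hρ.measurable]
  rw [hpre] at hrestrict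
  rw [hrestrict.map_eq]

variable [FiniteDimensional ℝ E] [μ.IsAddHaarMeasure]

theorem map_normalize_restrict_le_map_coe_toSphere {A : Set E} {r : ℝ} (hr : 0 < r)
    (hA : A ⊆ ball 0 r \ {0}) :
    (μ.restrict A).map NormedSpace.normalize ≤
      ENNReal.ofReal (r ^ finrank ℝ E) • μ.toSphere.map (↑) := by
  rcases subsingleton_or_nontrivial E with hE | hE
  · have : A = ∅ := eq_empty_of_forall_notMem fun v hv => (hA hv).2 (Subsingleton.elim v 0)
    simp only [this, restrict_empty, Measure.map_zero, Measure.zero_le]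
  refine le_iff.2 fun S hS => ?_
  rw [map_apply measurable_normalize hS, restrict_apply (measurable_normalize hS),
    Measure.smul_apply,
    map_coe_toSphere, Measure.smul_apply, map_apply measurable_normalize hS,
    restrict_apply (measurable_normalize hS), smul_eq_mul, nsmul_eq_mul]
  set U := NormedSpace.normalize ⁻¹' S ∩ (ball 0 1 \ {0})
  have hsub : NormedSpace.normalize ⁻¹' S ∩ A ⊆ r • U := by
    rintro v ⟨hvS, hvA⟩
    obtain ⟨hvr, hv0⟩ := hA hvA
    refine (mem_smul_set_iff_inv_smul_mem₀ hr.ne' _ _).2 ⟨?_, ?_, smul_ne_zero (by positivity) hv0⟩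
    · rwa [mem_preimage, NormedSpace.normalize_smul_of_pos (inv_pos.2 hr)]
    · rw [mem_ball_zero_iff] at hvr ⊢
      rwa [norm_smul, norm_inv, Real.norm_of_nonneg hr.le, inv_mul_lt_one₀ hr]
  have hdim : (1 : ℝ≥0∞) ≤ finrank ℝ E := by exact_mod_cast finrank_pos (R := ℝ) (M := E)
  calc μ (NormedSpace.normalize ⁻¹' S ∩ A) ≤ ENNReal.ofReal (r ^ finrank ℝ E) * μ U := by
        refine (measure_mono hsub).trans_eq ?_
        rw [addHaar_smul, abs_of_pos (pow_pos hr _)]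
    _ ≤ ENNReal.ofReal (r ^ finrank ℝ E) * (finrank ℝ E * μ U) := by
        gcongr
        exact le_mul_of_one_le_left' hdim

theorem setLIntegral_le_lintegral_toSphere {A : Set E} {r : ℝ} (hr : 0 < r)
    (hA : A ⊆ ball 0 r \ {0}) {f : E → ℝ≥0∞} (hf : Measurable f)
    (hhom : ∀ v, f (NormedSpace.normalize v) = f v) :
    ∫⁻ v in A, f v ∂μ ≤ ENNReal.ofReal (r ^ finrank ℝ E) * ∫⁻ ζ, f ζ ∂μ.toSphere := by
  calc ∫⁻ v in A, f v ∂μ = ∫⁻ v, f v ∂(μ.restrict A).map NormedSpace.normalize := by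
        rw [lintegral_map hf measurable_normalize]
        simp only [hhom]
    _ ≤ ∫⁻ v, f v ∂(ENNReal.ofReal (r ^ finrank ℝ E) • μ.toSphere.map (↑)) :=
        lintegral_mono' (map_normalize_restrict_le_map_coe_toSphere μ hr hA) le_rfl
    _ = _ := by
        rw [lintegral_smul_measure, lintegral_map hf measurable_subtype_coe, smul_eq_mul]

theorem memLp_restrict_of_memLp_toSphere {A : Set E} {r : ℝ} (hr : 0 < r)
    (hA : A ⊆ ball 0 r \ {0}) {f : E → ℝ} (hf : Measurable f)
    (hhom : ∀ v, f (NormedSpace.normalize v) = f v) {s : ℝ≥0∞}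
    (h : MemLp (fun ζ : sphere (0 : E) 1 => f ζ) s μ.toSphere) : MemLp f s (μ.restrict A) := by
  have hcoe : MemLp f s (μ.toSphere.map (↑)) :=
    (memLp_map_measure_iff hf.aestronglyMeasurable measurable_subtype_coe.aemeasurable).2 h
  have hmap : MemLp f s ((μ.restrict A).map NormedSpace.normalize) :=
    hcoe.of_measure_le_smul ENNReal.ofReal_ne_top
      (map_normalize_restrict_le_map_coe_toSphere μ hr hA)
  have hcomp := (memLp_map_measure_iff hf.aestronglyMeasurable
    measurable_normalize.aemeasurable).1 hmap
  rwa [show f ∘ NormedSpace.normalize = f from funext hhom] at hcomp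

end SphereMeasure

section AnnularCap

open Module Submodule

/-- The closed annulus of inner radius `a` and outer radius `b` centred at the origin. -/
def annulus (E : Type*) [NormedAddCommGroup E] (a b : ℝ) : Set E := {z | a ≤ ‖z‖ ∧ ‖z‖ ≤ b}

variable {E : Type*} [NormedAddCommGroup E]

theorem isClosed_annulus (a b : ℝ) : IsClosed (annulus E a b) :=
  (isClosed_le continuous_const continuous_norm).inter
    (isClosed_le continuous_norm continuous_const)

theorem annulus_subset_ball_diff_zero {a b r : ℝ} (ha : 0 < a) (hbr : b < r) :
    annulus E a b ⊆ ball 0 r \ {0} := fun _ hz =>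
  ⟨mem_ball_zero_iff.2 (hz.2.trans_lt hbr), norm_pos_iff.1 (ha.trans_le hz.1)⟩

variable [InnerProductSpace ℝ E]

/-- The part of an annulus lying in a narrow cone around the unit vector `e`, on which the
rotations `R_m R_e` with `m` near `e` provide a chart near each point. -/
def annularCap (e : E) : Set E := annulus E (1 / 4) 4 ∩ {z | 7 / 8 * ‖z‖ ≤ inner ℝ e z}

theorem isClosed_annularCap (e : E) : IsClosed (annularCap e) :=
  (isClosed_annulus _ _).inter (isClosed_le (by fun_prop) (by fun_prop))

theorem inner_pos_of_mem_annularCap {e z : E} (hz : z ∈ annularCap e) : 0 < inner ℝ e z :=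
  lt_of_lt_of_le (by linarith [hz.1.1]) hz.2

theorem exists_finset_annulus_subset_biUnion_annularCap [FiniteDimensional ℝ E] :
    ∃ t : Finset E, (∀ e ∈ t, ‖e‖ = 1) ∧ annulus E (1 / 4) 4 ⊆ ⋃ e : t, annularCap (e : E) := by
  obtain ⟨t, htsphere, htfin, hcover⟩ :=
    (isCompact_sphere (0 : E) 1).finite_cover_balls (e := 1 / 2) (by norm_num)
  refine ⟨htfin.toFinset, fun e he => by simpa using htsphere (htfin.mem_toFinset.1 he),
    fun z hz => ?_⟩
  have hz0 : z ≠ 0 := norm_pos_iff.1 (by linarith [hz.1])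
  have hnorm := NormedSpace.norm_normalize hz0
  obtain ⟨e, het, hdist⟩ := mem_iUnion₂.1
    (hcover (mem_sphere_zero_iff_norm.2 (NormedSpace.norm_normalize hz0)))
  refine mem_iUnion.2 ⟨⟨e, htfin.mem_toFinset.2 het⟩, hz, ?_⟩
  have hinner : 7 / 8 ≤ inner ℝ e (NormedSpace.normalize z) := by
    have he : ‖e‖ = 1 := by simpa using htsphere het
    rw [mem_ball_iff_norm'] at hdist
    have hsq := norm_sub_sq_real e (NormedSpace.normalize z)
    rw [he, hnorm] at hsq
    nlinarith [norm_nonneg (e - NormedSpace.normalize z)]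
  calc 7 / 8 * ‖z‖ ≤ inner ℝ e (NormedSpace.normalize z) * ‖z‖ := by gcongr
    _ = inner ℝ e z := by
      rw [mul_comm, ← real_inner_smul_right, NormedSpace.norm_smul_normalize]

theorem inner_reflection_nonneg_of_mem_annularCap {e z w : E} (he : ‖e‖ = 1)
    (hz : z ∈ annularCap e) (hw : ‖w - z‖ ≤ 1 / 8) :
    0 ≤ inner ℝ ((ℝ ∙ e).reflection z) w := by
  have hz14 : 1 / 4 ≤ ‖z‖ := hz.1.1
  have hez : 7 / 8 * ‖z‖ ≤ inner ℝ e z := hz.2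
  have hself : inner ℝ ((ℝ ∙ e).reflection z) z = 2 * inner ℝ e z ^ 2 - ‖z‖ ^ 2 := by
    rw [reflection_singleton_eq_normalize, NormedSpace.normalize_eq_self_of_norm_eq_one he,
      inner_sub_left, real_inner_smul_left, real_inner_self_eq_norm_sq]
    ring
  have hdiff : -(‖z‖ * (1 / 8)) ≤ inner ℝ ((ℝ ∙ e).reflection z) (w - z) := by
    refine (neg_le_neg ?_).trans (neg_abs_le _)
    calc |inner ℝ ((ℝ ∙ e).reflection z) (w - z)|
        ≤ ‖(ℝ ∙ e).reflection z‖ * ‖w - z‖ := abs_real_inner_le_norm _ _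
      _ ≤ ‖z‖ * (1 / 8) := by rw [LinearIsometryEquiv.norm_map]; gcongr
  rw [inner_sub_right, hself] at hdiff
  nlinarith [mul_le_mul hez hez (by positivity) (by linarith)]

/-- The direction of the line whose reflection sends `R_e z` to the direction of `w`, scaled so
that it takes the value `e` at `w = z`. -/
def reflectionChart (e z w : E) : E :=
  (2 * ‖z‖ * inner ℝ e z)⁻¹ • bisector ((ℝ ∙ e).reflection z) w

theorem continuous_reflectionChart (e z : E) : Continuous (reflectionChart e z) := by
  unfold reflectionChart bisector
  fun_prop

theorem reflectionChart_self {e z : E} (he : ‖e‖ = 1) (hz : z ∈ annularCap e) :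
    reflectionChart e z z = e := by
  have hinner := inner_pos_of_mem_annularCap hz
  have hz0 : 0 < ‖z‖ := by linarith [hz.1.1]
  have hbisector : bisector ((ℝ ∙ e).reflection z) z = (2 * ‖z‖ * inner ℝ e z) • e := by
    rw [bisector, LinearIsometryEquiv.norm_map, ← smul_add, reflection_singleton_eq_normalize,
      NormedSpace.normalize_eq_self_of_norm_eq_one he]
    module
  rw [reflectionChart, hbisector, inv_smul_smul₀ (by positivity)]

theorem mapsTo_reflectionChart {e z : E} (he : ‖e‖ = 1) (hz : z ∈ annularCap e) (r : ℝ) :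
    MapsTo (reflectionChart e z) (ball z r) (ball e (8 * r)) := by
  intro w hw
  rw [mem_ball_iff_norm] at hw ⊢
  have hz0 : 0 < ‖z‖ := by linarith [hz.1.1]
  have hinner := inner_pos_of_mem_annularCap hz
  have hinner8 : 1 / 8 ≤ inner ℝ e z := by linarith [hz.1.1, hz.2.out]
  calc ‖reflectionChart e z w - e‖
      = ‖reflectionChart e z w - reflectionChart e z z‖ := by rw [reflectionChart_self he hz]
    _ ≤ (2 * ‖z‖ * inner ℝ e z)⁻¹ * (2 * ‖z‖ * ‖w - z‖) := by
        rw [reflectionChart, reflectionChart, ← smul_sub, norm_smul, norm_inv,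
          Real.norm_of_nonneg (by positivity)]
        gcongr
        simpa only [LinearIsometryEquiv.norm_map] using
          norm_bisector_sub_le ((ℝ ∙ e).reflection z) w z
    _ = ‖w - z‖ / inner ℝ e z := by field_simp
    _ ≤ ‖w - z‖ / (1 / 8) := by gcongr
    _ < 8 * r := by linarith

theorem antilipschitz_reflectionChart {e z : E} (he : ‖e‖ = 1) (hz : z ∈ annularCap e) {r : ℝ}
    (hr : r ≤ 1 / 8) : AntilipschitzWith 16 ((ball z r).domRestrict (reflectionChart e z)) := by
  refine AntilipschitzWith.of_le_mul_dist fun ⟨w, hw⟩ ⟨v, hv⟩ => ?_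
  rw [mem_ball_iff_norm] at hw hv
  have hz0 : 0 < ‖z‖ := by linarith [hz.1.1]
  have hinner := inner_pos_of_mem_annularCap hz
  have hinner4 : inner ℝ e z ≤ 4 :=
    (real_inner_le_norm e z).trans (by rw [he, one_mul]; exact hz.1.2)
  have hanti := norm_mul_norm_sub_le_norm_bisector_sub
    (inner_reflection_nonneg_of_mem_annularCap he hz (hw.le.trans hr))
    (inner_reflection_nonneg_of_mem_annularCap he hz (hv.le.trans hr))
  have hscale : bisector ((ℝ ∙ e).reflection z) w - bisector ((ℝ ∙ e).reflection z) v =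
      (2 * ‖z‖ * inner ℝ e z) • (reflectionChart e z w - reflectionChart e z v) := by
    rw [reflectionChart, reflectionChart, ← smul_sub, smul_inv_smul₀ (by positivity)]
  rw [hscale, norm_smul, Real.norm_of_nonneg (by positivity), LinearIsometryEquiv.norm_map] at hanti
  rw [Subtype.dist_eq, dist_eq_norm, dist_eq_norm]
  change ‖w - v‖ ≤ 16 * ‖reflectionChart e z w - reflectionChart e z v‖
  calc ‖w - v‖ ≤ 4 * inner ℝ e z * ‖reflectionChart e z w - reflectionChart e z v‖ := by
        refine le_of_mul_le_mul_left (hanti.trans_eq ?_) hz0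
        ring
    _ ≤ 4 * 4 * ‖reflectionChart e z w - reflectionChart e z v‖ := by gcongr
    _ = _ := by norm_num

theorem apply_reflection_reflectionChart {X : Type*} {f : E → X}
    (hhom : ∀ v, f (NormedSpace.normalize v) = f v) {e z w : E} (hz : z ∈ annularCap e)
    (hw : w ≠ 0) :
    f ((ℝ ∙ reflectionChart e z w).reflection ((ℝ ∙ e).reflection z)) = f w := by
  have hz0 : 0 < ‖z‖ := by linarith [hz.1.1]
  have hinner := inner_pos_of_mem_annularCap hz
  have hsmul {c : ℝ} (hc : 0 < c) (v : E) : f (c • v) = f v := by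
    rw [← hhom, NormedSpace.normalize_smul_of_pos hc, hhom]
  rw [← hsmul (norm_pos_iff.2 hw), ← map_smul, reflection_singleton_eq_normalize, reflectionChart,
    NormedSpace.normalize_smul_of_pos (by positivity), ← reflection_singleton_eq_normalize,
    reflection_bisector, LinearIsometryEquiv.norm_map, hsmul hz0]

variable [FiniteDimensional ℝ E] [MeasurableSpace E] [BorelSpace E] (μ : Measure E)
  [μ.IsAddHaarMeasure]

theorem setLIntegral_ball_le_setLIntegral_reflection {e z : E} (he : ‖e‖ = 1)
    (hz : z ∈ annularCap e) {r : ℝ} (hr : r ≤ 1 / 8) {f : E → ℝ≥0∞} (hf : Measurable f)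
    (hhom : ∀ v, f (NormedSpace.normalize v) = f v) :
    ∫⁻ w in ball z r, f w ∂μ ≤ 16 ^ finrank ℝ E *
      ∫⁻ m in ball e (8 * r), f ((ℝ ∙ m).reflection ((ℝ ∙ e).reflection z)) ∂μ := by
  have hne {w : E} (hw : w ∈ ball z r) : w ≠ 0 := by
    rintro rfl
    rw [mem_ball_iff_norm', sub_zero] at hw
    linarith [hz.1.1]
  calc ∫⁻ w in ball z r, f w ∂μ
      = ∫⁻ w in ball z r,
          f ((ℝ ∙ reflectionChart e z w).reflection ((ℝ ∙ e).reflection z)) ∂μ :=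
        setLIntegral_congr_fun measurableSet_ball fun w hw =>
          (apply_reflection_reflectionChart hhom hz (hne hw)).symm
    _ ≤ _ := setLIntegral_comp_le_of_antilipschitz μ (continuous_reflectionChart e z).measurable
        (antilipschitz_reflectionChart he hz hr) (mapsTo_reflectionChart he hz r)
        (hf.comp (measurable_reflection_singleton.comp (measurable_id.prodMk measurable_const)))

end AnnularCap

section AveragedTranslation

open Function Module Submodule

variable {E : Type*} [NormedAddCommGroup E] [InnerProductSpace ℝ E] [FiniteDimensional ℝ E]
  [MeasurableSpace E] [BorelSpace E] (μ : Measure E) [μ.IsAddHaarMeasure]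

theorem lintegral_annularCap_le {h : E → E → ℝ≥0∞} (hh : Measurable (uncurry h))
    (hfst : ∀ z w, h (NormedSpace.normalize z) w = h z w)
    (hsnd : ∀ z w, h z (NormedSpace.normalize w) = h z w) {e : E} (he : ‖e‖ = 1) {r : ℝ}
    (hr : r ≤ 1 / 8) {B : ℝ≥0∞}
    (hB : ∀ m ∈ ball e (8 * r), ∫⁻ ζ : sphere (0 : E) 1,
      h ζ ((ℝ ∙ m).reflection ((ℝ ∙ e).reflection ζ)) ∂μ.toSphere ≤ B) :
    ∫⁻ z in annularCap e, ∫⁻ w in ball z r, h z w ∂μ ∂μ ≤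
      16 ^ finrank ℝ E * ENNReal.ofReal (5 ^ finrank ℝ E) * ENNReal.ofReal (8 ^ finrank ℝ E) *
        (B * μ (ball 0 r)) := by
  set k : E → E → ℝ≥0∞ := fun z m => h z ((ℝ ∙ m).reflection ((ℝ ∙ e).reflection z)) with hk
  have hkm : Measurable (uncurry k) := hh.comp (measurable_fst.prodMk
    (measurable_reflection_singleton.comp (measurable_snd.prodMk
      ((ℝ ∙ e).reflection.continuous.measurable.comp measurable_fst))))
  have hkhom (m z : E) : k (NormedSpace.normalize z) m = k z m := by
    simp only [hk, hfst]
    rw [← normalize_linearIsometryEquiv_apply, ← normalize_linearIsometryEquiv_apply, hsnd]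
  have hcap : annularCap e ⊆ ball 0 5 \ {0} :=
    inter_subset_left.trans (annulus_subset_ball_diff_zero (by norm_num) (by norm_num))
  have hfixed : ∀ m ∈ ball e (8 * r),
      ∫⁻ z in annularCap e, k z m ∂μ ≤ ENNReal.ofReal (5 ^ finrank ℝ E) * B := fun m hm =>
    (setLIntegral_le_lintegral_toSphere μ (by norm_num) hcap hkm.of_uncurry_right
      (hkhom m)).trans (by gcongr; exact hB m hm)
  calc ∫⁻ z in annularCap e, ∫⁻ w in ball z r, h z w ∂μ ∂μ
      ≤ ∫⁻ z in annularCap e, 16 ^ finrank ℝ E * ∫⁻ m in ball e (8 * r), k z m ∂μ ∂μ :=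
        setLIntegral_mono' (isClosed_annularCap e).measurableSet fun z hz =>
          setLIntegral_ball_le_setLIntegral_reflection μ he hz hr hh.of_uncurry_left (hsnd z)
    _ = 16 ^ finrank ℝ E * ∫⁻ m in ball e (8 * r), ∫⁻ z in annularCap e, k z m ∂μ ∂μ := by
        rw [lintegral_const_mul' _ _ (by finiteness), lintegral_lintegral_swap hkm.aemeasurable]
    _ ≤ 16 ^ finrank ℝ E * (ENNReal.ofReal (5 ^ finrank ℝ E) * B * μ (ball e (8 * r))) := by
        gcongr
        exact (setLIntegral_mono' measurableSet_ball hfixed).trans_eq (setLIntegral_const _ _)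
    _ = _ := by rw [Measure.addHaar_ball_mul_of_pos μ e (by norm_num)]; ring

theorem exists_lintegral_annulus_le :
    ∃ C ≠ ∞, ∀ h : E → E → ℝ≥0∞, Measurable (uncurry h) →
      (∀ z w, h (NormedSpace.normalize z) w = h z w) →
      (∀ z w, h z (NormedSpace.normalize w) = h z w) → ∀ r ≤ (1 / 8 : ℝ), ∀ B : ℝ≥0∞,
      (∀ e : E, ‖e‖ = 1 → ∀ m ∈ ball e (8 * r), ∫⁻ ζ : sphere (0 : E) 1,
        h ζ ((ℝ ∙ m).reflection ((ℝ ∙ e).reflection ζ)) ∂μ.toSphere ≤ B) →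
      ∫⁻ z in annulus E (1 / 4) 4, ∫⁻ w in ball z r, h z w ∂μ ∂μ ≤ C * (B * μ (ball 0 r)) := by
  obtain ⟨t, ht, hcover⟩ := exists_finset_annulus_subset_biUnion_annularCap (E := E)
  set K := (16 : ℝ≥0∞) ^ finrank ℝ E * ENNReal.ofReal (5 ^ finrank ℝ E) *
    ENNReal.ofReal (8 ^ finrank ℝ E)
  have hK : K ≠ ∞ := by finiteness
  refine ⟨t.card * K, by finiteness, fun h hh hfst hsnd r hr B hB => ?_⟩
  calc ∫⁻ z in annulus E (1 / 4) 4, ∫⁻ w in ball z r, h z w ∂μ ∂μ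
      ≤ ∑' e : t, ∫⁻ z in annularCap (e : E), ∫⁻ w in ball z r, h z w ∂μ ∂μ :=
        (lintegral_mono_set hcover).trans (lintegral_iUnion_le _ _)
    _ ≤ ∑' _ : t, K * (B * μ (ball 0 r)) := ENNReal.tsum_le_tsum fun e =>
        lintegral_annularCap_le μ hh hfst hsnd (ht e e.2) hr (hB e (ht e e.2))
    _ = t.card * K * (B * μ (ball 0 r)) := by
        rw [tsum_fintype, Finset.sum_const, Finset.card_univ, Fintype.card_coe, nsmul_eq_mul,
          ← mul_assoc]

theorem exists_le_and_sub_le_of_setLIntegral_ball_le {Φ : E → ℝ≥0∞} (hΦ : Measurable Φ) {r : ℝ}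
    (hr : 0 < r) {c : ℝ≥0∞} (hc : ∫⁻ u in ball 0 (2 * r), Φ u ∂μ ≤ c * μ (ball 0 r)) {y : E}
    (hy : ‖y‖ ≤ r) : ∃ u, ‖u‖ < r ∧ Φ u ≤ 2 * c ∧ Φ (u - y) ≤ 2 * c := by
  have hball0 : μ (ball 0 r) ≠ 0 := (measure_ball_pos μ 0 hr).ne'
  have hballtop : μ (ball 0 r) ≠ ∞ := measure_ball_lt_top.ne
  have hfst : ∫⁻ u in ball 0 r, Φ u ∂μ ≤ c * μ (ball 0 r) :=
    (lintegral_mono_set (ball_subset_ball (by linarith))).trans hc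
  have hsnd : ∫⁻ u in ball 0 r, Φ (u - y) ∂μ ≤ c * μ (ball 0 r) := by
    have hsub : ball 0 r ⊆ (fun u => u - y) ⁻¹' ball 0 (2 * r) := fun u hu => by
      rw [mem_ball_zero_iff] at hu
      rw [mem_preimage, mem_ball_zero_iff]
      linarith [norm_sub_le u y]
    refine (lintegral_mono_set hsub).trans (Eq.trans_le ?_ hc)
    exact (measurePreserving_sub_right μ y).setLIntegral_comp_preimage measurableSet_ball hΦ
  obtain ⟨u, hu, hle⟩ := exists_le_setLAverage (μ := μ) hball0 hballtop
    (hΦ.add (hΦ.comp (measurable_sub_const y))).aemeasurable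
  have hsum : Φ u + Φ (u - y) ≤ 2 * c := by
    refine hle.trans ?_
    rw [setLAverage_eq, ENNReal.div_le_iff hball0 hballtop]
    simp only [Pi.add_apply, comp_apply]
    rw [lintegral_add_left hΦ, two_mul, add_mul]
    exact add_le_add hfst hsnd
  exact ⟨u, mem_ball_zero_iff.1 hu, le_self_add.trans hsum, le_add_self.trans hsum⟩

theorem setLIntegral_lintegral_ball_eq {h : E → E → ℝ≥0∞} (hh : Measurable (uncurry h))
    (A : Set E) (r : ℝ) :
    ∫⁻ z in A, ∫⁻ w in ball z r, h z w ∂μ ∂μ =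
      ∫⁻ u in ball 0 r, ∫⁻ z in A, h z (z + u) ∂μ ∂μ := by
  have hball (z : E) : (z + ·) ⁻¹' ball z r = ball 0 r := by
    ext u
    simp
  have htranslate (z : E) :
      ∫⁻ w in ball z r, h z w ∂μ = ∫⁻ u in ball 0 r, h z (z + u) ∂μ := by
    rw [← hball z, (measurePreserving_add_left μ z).setLIntegral_comp_preimage
      measurableSet_ball hh.of_uncurry_left]
  simp only [htranslate]
  refine lintegral_lintegral_swap (Measurable.aemeasurable ?_)
  exact hh.comp (measurable_fst.prodMk measurable_add)

theorem exists_lintegral_translation_le :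
    ∃ C ≠ ∞, 1 ≤ C ∧ ∀ h : E → E → ℝ≥0∞, Measurable (uncurry h) →
      (∀ z w, h (NormedSpace.normalize z) w = h z w) →
      (∀ z w, h z (NormedSpace.normalize w) = h z w) → ∀ r : ℝ, 0 < r → r ≤ 1 / 16 →
      ∀ B : ℝ≥0∞, (∀ e : E, ‖e‖ = 1 → ∀ m ∈ ball e (16 * r), ∫⁻ ζ : sphere (0 : E) 1,
        h ζ ((ℝ ∙ m).reflection ((ℝ ∙ e).reflection ζ)) ∂μ.toSphere ≤ B) →
      ∀ y : E, ‖y‖ ≤ r → ∃ u, ‖u‖ < r ∧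
        ∫⁻ z in annulus E (1 / 4) 4, h z (z + u) ∂μ ≤ C * B ∧
        ∫⁻ z in annulus E (1 / 4) 4, h z (z + (u - y)) ∂μ ≤ C * B := by
  obtain ⟨C, hC, hCle⟩ := exists_lintegral_annulus_le μ
  set D := ENNReal.ofReal (2 ^ finrank ℝ E)
  refine ⟨2 * (C * D) + 1, by finiteness, le_add_self,
    fun h hh hfst hsnd r hr hr16 B hB y hy => ?_⟩
  have hΦ : Measurable fun u => ∫⁻ z in annulus E (1 / 4) 4, h z (z + u) ∂μ :=
    Measurable.lintegral_prod_left (hh.comp (measurable_fst.prodMk measurable_add))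
  have hmean : ∫⁻ u in ball 0 (2 * r), ∫⁻ z in annulus E (1 / 4) 4, h z (z + u) ∂μ ∂μ ≤
      C * D * B * μ (ball 0 r) := by
    rw [← setLIntegral_lintegral_ball_eq μ hh]
    refine (hCle h hh hfst hsnd (2 * r) (by linarith) B ?_).trans_eq ?_
    · rwa [← mul_assoc, show (8 : ℝ) * 2 = 16 by norm_num]
    · rw [Measure.addHaar_ball_mul_of_pos μ 0 two_pos]
      ring
  obtain ⟨u, hu, hle, hsub⟩ := exists_le_and_sub_le_of_setLIntegral_ball_le μ hΦ hr hmean hy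
  have hconst : 2 * (C * D * B) ≤ (2 * (C * D) + 1) * B := by
    rw [← mul_assoc]
    gcongr
    exact le_self_add
  exact ⟨u, hu, hle.trans hconst, hsub.trans hconst⟩

end AveragedTranslation

section LpIntegrand

/-- An integrand whose integral detects `eLpNorm g s μ ≤ M`, so that one argument about
`∫⁻` covers every exponent: `‖t‖ₑ ^ s` for finite `s`, and the indicator of `M < ‖t‖ₑ` when
`s = ∞`. -/
def lpIntegrand (s M : ℝ≥0∞) (t : ℝ) : ℝ≥0∞ :=
  if s = ∞ then {t : ℝ | M < ‖t‖ₑ}.indicator 1 t else ‖t‖ₑ ^ s.toReal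

/-- The value of `∫⁻ x, lpIntegrand s M (g x) ∂μ` that corresponds to `eLpNorm g s μ = M`. -/
def lpBound (s M : ℝ≥0∞) : ℝ≥0∞ :=
  if s = ∞ then 0 else M ^ s.toReal

variable {β : Type*} [MeasurableSpace β] {μ : Measure β} {g : β → ℝ} {s M : ℝ≥0∞}

@[fun_prop]
theorem measurable_lpIntegrand (s M : ℝ≥0∞) : Measurable (lpIntegrand s M) := by
  unfold lpIntegrand
  split_ifs
  · exact measurable_one.indicator (measurableSet_lt measurable_const measurable_enorm)
  · fun_prop

theorem lintegral_lpIntegrand_top_eq_zero_iff (hg : AEMeasurable g μ) :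
    ∫⁻ x, lpIntegrand ∞ M (g x) ∂μ = 0 ↔ eLpNorm g ∞ μ ≤ M := by
  have hle_iff : eLpNorm g ∞ μ ≤ M ↔ ∀ᵐ x ∂μ, ‖g x‖ₑ ≤ M := by
    rw [eLpNorm_exponent_top]
    exact ⟨fun h => (enorm_ae_le_eLpNormEssSup g μ).mono fun x hx => hx.trans h,
      fun h => essSup_le_of_ae_le _ h⟩
  rw [hle_iff]
  refine (lintegral_eq_zero_iff' ((measurable_lpIntegrand _ _).comp_aemeasurable hg)).trans ?_
  refine Filter.eventually_congr (.of_forall fun x => ?_)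
  simp [lpIntegrand, indicator_apply]

theorem lintegral_lpIntegrand_eq (hs0 : s ≠ 0) (hs : s ≠ ∞) :
    ∫⁻ x, lpIntegrand s M (g x) ∂μ = eLpNorm g s μ ^ s.toReal := by
  simp only [lpIntegrand, if_neg hs]
  rw [eLpNorm_eq_lintegral_rpow_enorm_toReal hs0 hs, one_div,
    ENNReal.rpow_inv_rpow (ENNReal.toReal_pos hs0 hs).ne']

theorem lintegral_lpIntegrand_le_lpBound (hs : s ≠ 0) (hg : AEMeasurable g μ)
    (hM : eLpNorm g s μ ≤ M) : ∫⁻ x, lpIntegrand s M (g x) ∂μ ≤ lpBound s M := by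
  rcases eq_or_ne s ∞ with rfl | hst
  · exact ((lintegral_lpIntegrand_top_eq_zero_iff hg).2 hM).trans_le zero_le
  · rw [lintegral_lpIntegrand_eq hs hst, lpBound, if_neg hst]
    gcongr

theorem eLpNorm_le_of_lintegral_lpIntegrand_le {K : ℝ≥0∞} (hs : 1 ≤ s) (hK : 1 ≤ K)
    (hg : AEMeasurable g μ) (h : ∫⁻ x, lpIntegrand s M (g x) ∂μ ≤ K * lpBound s M) :
    eLpNorm g s μ ≤ K * M := by
  rcases eq_or_ne s ∞ with rfl | hst
  · rw [lpBound, if_pos rfl, mul_zero, nonpos_iff_eq_zero] at h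
    exact ((lintegral_lpIntegrand_top_eq_zero_iff hg).1 h).trans (le_mul_of_one_le_left' hK)
  · have hs0 : s ≠ 0 := (one_pos.trans_le hs).ne'
    have hs1 : 1 ≤ s.toReal := by simpa using ENNReal.toReal_mono hst hs
    rw [lintegral_lpIntegrand_eq hs0 hst, lpBound, if_neg hst] at h
    rw [← ENNReal.rpow_le_rpow_iff (one_pos.trans_le hs1),
      ENNReal.mul_rpow_of_nonneg _ _ (zero_le_one.trans hs1)]
    refine h.trans ?_
    gcongr
    simpa using ENNReal.rpow_le_rpow_of_exponent_le hK hs1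

end LpIntegrand

section Modulus

variable {n : ℕ} {s : ℝ≥0∞} {Ω : En n → ℝ}

/-- The modulus of continuity `ω_s(δ)` before conversion to a real number;
`modCont s Ω δ = (emodCont s Ω δ).toReal` holds definitionally. -/
def emodCont (s : ℝ≥0∞) (Ω : En n → ℝ) (δ : ℝ) : ℝ≥0∞ :=
  ⨆ ρ : {ρ : En n ≃ₗᵢ[ℝ] En n // IsRotation ρ ∧ rotNorm ρ < δ},
    eLpNorm (fun x : sphere (0 : En n) 1 => Ω (ρ.1 (x : En n)) - Ω (x : En n)) s
      (sphereMeasure n)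

theorem eLpNorm_rotation_sub_le_emodCont {ρ : En n ≃ₗᵢ[ℝ] En n} {δ : ℝ} (hρ : IsRotation ρ)
    (hδ : rotNorm ρ < δ) :
    eLpNorm (fun x : sphere (0 : En n) 1 => Ω (ρ (x : En n)) - Ω (x : En n)) s
      (sphereMeasure n) ≤ emodCont s Ω δ :=
  le_iSup (fun ρ : {ρ : En n ≃ₗᵢ[ℝ] En n // IsRotation ρ ∧ rotNorm ρ < δ} =>
    eLpNorm (fun x : sphere (0 : En n) 1 => Ω (ρ.1 (x : En n)) - Ω (x : En n)) s
      (sphereMeasure n)) ⟨ρ, hρ, hδ⟩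

theorem emodCont_mono : Monotone (emodCont s Ω) := fun _ _ hab =>
  iSup_le fun ρ => eLpNorm_rotation_sub_le_emodCont ρ.2.1 (ρ.2.2.trans_le hab)

theorem rotNorm_nonneg (ρ : En n ≃ₗᵢ[ℝ] En n) : 0 ≤ rotNorm ρ :=
  Real.iSup_nonneg fun _ => norm_nonneg _

theorem modCont_zero : modCont s Ω 0 = 0 := by
  have : IsEmpty {ρ : En n ≃ₗᵢ[ℝ] En n // IsRotation ρ ∧ rotNorm ρ < 0} :=
    ⟨fun ρ => (rotNorm_nonneg ρ.1).not_gt ρ.2.2⟩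
  rw [modCont, iSup_of_empty, bot_eq_zero, ENNReal.toReal_zero]

theorem eLpNorm_comp_linearIsometryEquiv_sphere (hΩ : Measurable Ω) (ρ : En n ≃ₗᵢ[ℝ] En n) :
    eLpNorm (fun x : sphere (0 : En n) 1 => Ω (ρ x)) s (sphereMeasure n) = sphereLpNorm s Ω := by
  have hcoe {f : En n → ℝ} (hf : Measurable f) :
      eLpNorm (fun x : sphere (0 : En n) 1 => f x) s (sphereMeasure n) =
        eLpNorm f s ((sphereMeasure n).map (↑)) :=
    (eLpNorm_map_measure hf.aestronglyMeasurable measurable_subtype_coe.aemeasurable).symm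
  rw [sphereLpNorm, hcoe hΩ, hcoe (f := fun z => Ω (ρ z)) (by fun_prop)]
  exact eLpNorm_comp_measurePreserving hΩ.aestronglyMeasurable
    (measurePreserving_map_coe_toSphere volume ρ.measurePreserving)

theorem emodCont_le (hs : 1 ≤ s) (hΩ : Measurable Ω) (δ : ℝ) :
    emodCont s Ω δ ≤ 2 * sphereLpNorm s Ω := by
  refine iSup_le fun ρ => ?_
  calc _ ≤ eLpNorm (fun x : sphere (0 : En n) 1 => Ω (ρ.1 x)) s (sphereMeasure n) +
        sphereLpNorm s Ω := eLpNorm_sub_le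
          (Measurable.aestronglyMeasurable (by fun_prop))
          (Measurable.aestronglyMeasurable (by fun_prop)) hs
    _ = 2 * sphereLpNorm s Ω := by
      rw [eLpNorm_comp_linearIsometryEquiv_sphere hΩ, two_mul]

theorem emodCont_ne_top (hs : 1 ≤ s) (hΩ : Measurable Ω) (h : sphereLpNorm s Ω ≠ ∞) (δ : ℝ) :
    emodCont s Ω δ ≠ ∞ :=
  ne_top_of_le_ne_top (by finiteness) (emodCont_le hs hΩ δ)

theorem modCont_mono (hs : 1 ≤ s) (hΩ : Measurable Ω) (h : sphereLpNorm s Ω ≠ ∞) :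
    Monotone (modCont s Ω) := fun _ b hab =>
  ENNReal.toReal_mono (emodCont_ne_top hs hΩ h b) (emodCont_mono hab)

theorem le_two_mul_integral_div_of_monotone {w : ℝ → ℝ} (hw : Monotone w) {a : ℝ} (ha : 0 < a)
    (hwa : 0 ≤ w a) : w a ≤ 2 * ∫ δ in a..(2 * a), w δ / δ := by
  have hle : a ≤ 2 * a := by linarith
  have hint : IntervalIntegrable (fun δ => w δ / δ) volume a (2 * a) := by
    simp only [div_eq_mul_inv]
    refine hw.intervalIntegrable.mul_continuousOn (continuousOn_id.inv₀ fun δ hδ => ?_)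
    rw [uIcc_of_le hle] at hδ
    exact (ha.trans_le hδ.1).ne'
  have hconst : ∫ _ in a..(2 * a), w a / (2 * a) = w a / 2 := by
    rw [intervalIntegral.integral_const, smul_eq_mul]
    field_simp
    ring
  have hmono := intervalIntegral.integral_mono_on (f := fun _ => w a / (2 * a)) hle
    intervalIntegrable_const hint fun δ hδ =>
      div_le_div₀ (hwa.trans (hw hδ.1)) (hw hδ.1) (ha.trans_le hδ.1) hδ.2
  linarith

theorem modCont_le_two_mul_integral (hs : 1 ≤ s) (hΩ : Measurable Ω)
    (h : sphereLpNorm s Ω ≠ ∞) {a : ℝ} (ha : 0 ≤ a) :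
    modCont s Ω a ≤ 2 * ∫ δ in a..(2 * a), modCont s Ω δ / δ := by
  rcases ha.eq_or_lt with rfl | ha
  · simp [modCont_zero]
  · exact le_two_mul_integral_div_of_monotone (modCont_mono hs hΩ h) ha ENNReal.toReal_nonneg

theorem HomZero.apply_normalize (hΩ : HomZero Ω) (v : En n) :
    Ω (NormedSpace.normalize v) = Ω v := by
  rcases eq_or_ne v 0 with rfl | hv
  · rw [NormedSpace.normalize_zero_eq_zero]
  · exact hΩ _ (inv_pos.2 (norm_pos_iff.2 hv)) v hv

end Modulus

section Translation

theorem eLpNorm_comp_add_right_le {E F : Type*} [MeasurableSpace E] [AddGroup E]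
    [MeasurableAdd E] [NormedAddCommGroup F] {μ : Measure E} [μ.IsAddRightInvariant]
    {A B : Set E} (hB : MeasurableSet B) {v : E} (hAB : ∀ z ∈ A, z + v ∈ B) {f : E → F}
    (hf : AEStronglyMeasurable f (μ.restrict B)) (s : ℝ≥0∞) :
    eLpNorm (fun z => f (z + v)) s (μ.restrict A) ≤ eLpNorm f s (μ.restrict B) :=
  (eLpNorm_mono_measure _ (Measure.restrict_mono hAB le_rfl)).trans_eq
    (eLpNorm_comp_measurePreserving hf
      ((measurePreserving_add_right μ v).restrict_preimage hB))

theorem eLpNorm_add_nsmul_sub_le {E : Type*} [NormedAddCommGroup E] [MeasurableSpace E]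
    [BorelSpace E] {μ : Measure E} [μ.IsAddRightInvariant] {A B : Set E} (hB : MeasurableSet B)
    {f : E → ℝ} (hf : Measurable f) {s : ℝ≥0∞} (hs : 1 ≤ s) {y : E} {N : ℕ}
    (hAB : ∀ k < N, ∀ z ∈ A, z + k • y ∈ B) :
    eLpNorm (fun z => f (z + N • y) - f z) s (μ.restrict A) ≤
      N * eLpNorm (fun z => f (z + y) - f z) s (μ.restrict B) := by
  induction N with
  | zero => simp
  | succ N ih =>
    have hsplit : (fun z => f (z + (N + 1) • y) - f z) =
        (fun z => f (z + N • y) - f z) + fun z => f (z + N • y + y) - f (z + N • y) := by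
      ext z
      simp [succ_nsmul, add_assoc]
    rw [hsplit, Nat.cast_succ, add_one_mul]
    refine (eLpNorm_add_le (Measurable.aestronglyMeasurable (by fun_prop))
      (Measurable.aestronglyMeasurable (by fun_prop)) hs).trans (add_le_add ?_ ?_)
    · exact ih fun k hk => hAB k (hk.trans N.lt_succ_self)
    · exact eLpNorm_comp_add_right_le hB (hAB N N.lt_succ_self)
        (f := fun z => f (z + y) - f z) (Measurable.aestronglyMeasurable (by fun_prop)) s

theorem eLpNorm_reflection_sub_le_emodCont {n : ℕ} {s : ℝ≥0∞} {Ω : En n → ℝ} {e m : En n}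
    (he : ‖e‖ = 1) (hm : m ≠ 0) {δ : ℝ} (hδ : 8 * ‖m - e‖ < δ) :
    eLpNorm (fun ζ : sphere (0 : En n) 1 =>
      Ω ((ℝ ∙ m).reflection ((ℝ ∙ e).reflection ζ)) - Ω ζ) s (sphereMeasure n) ≤
        emodCont s Ω δ := by
  have he0 : e ≠ 0 := norm_pos_iff.1 (he ▸ one_pos)
  have h := eLpNorm_rotation_sub_le_emodCont (s := s) (Ω := Ω)
    (isRotation_reflection_trans_reflection hm he0)
    ((rotNorm_reflection_trans_reflection_le he m).trans_lt hδ)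
  simpa only [LinearIsometryEquiv.trans_apply] using h

theorem exists_eLpNorm_intermediate_translation_le (n : ℕ) :
    ∃ C ≠ ∞, ∀ s : ℝ≥0∞, 1 ≤ s → ∀ Ω : En n → ℝ, Measurable Ω → HomZero Ω →
      ∀ y : En n, y ≠ 0 → ‖y‖ ≤ 1 / 16 → ∃ u : En n, ‖u‖ < ‖y‖ ∧
        eLpNorm (fun z => Ω (z + u) - Ω z) s (volume.restrict (annulus (En n) (1 / 4) 4)) ≤
          C * emodCont s Ω (128 * ‖y‖) ∧
        eLpNorm (fun z => Ω (z + (u - y)) - Ω z) s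
          (volume.restrict (annulus (En n) (1 / 4) 4)) ≤ C * emodCont s Ω (128 * ‖y‖) := by
  obtain ⟨C, hC, hC1, hCle⟩ := exists_lintegral_translation_le (volume : Measure (En n))
  refine ⟨C, hC, fun s hs Ω hΩ hhom y hy0 hy => ?_⟩
  set M := emodCont s Ω (128 * ‖y‖)
  have hrot (e : En n) (he : ‖e‖ = 1) (m : En n) (hm : m ∈ ball e (16 * ‖y‖)) :
      ∫⁻ ζ : sphere (0 : En n) 1, lpIntegrand s M
        (Ω ((ℝ ∙ m).reflection ((ℝ ∙ e).reflection ζ)) - Ω ζ) ∂sphereMeasure n ≤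
          lpBound s M := by
    rw [mem_ball_iff_norm] at hm
    have hm0 : m ≠ 0 := by
      rintro rfl
      rw [zero_sub, norm_neg, he] at hm
      linarith
    exact lintegral_lpIntegrand_le_lpBound (one_pos.trans_le hs).ne'
      (Measurable.aemeasurable (by fun_prop))
      (eLpNorm_reflection_sub_le_emodCont he hm0 (by linarith))
  obtain ⟨u, hu, hle, hle'⟩ := hCle (fun z w => lpIntegrand s M (Ω w - Ω z))
    ((measurable_lpIntegrand s M).comp (by fun_prop))
    (fun z w => by rw [hhom.apply_normalize]) (fun z w => by rw [hhom.apply_normalize])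
    ‖y‖ (norm_pos_iff.2 hy0) hy (lpBound s M) hrot y le_rfl
  exact ⟨u, hu,
    eLpNorm_le_of_lintegral_lpIntegrand_le hs hC1 (Measurable.aemeasurable (by fun_prop)) hle,
    eLpNorm_le_of_lintegral_lpIntegrand_le hs hC1 (Measurable.aemeasurable (by fun_prop)) hle'⟩

theorem add_mem_annulus {E : Type*} [NormedAddCommGroup E] {a b c : ℝ} {z v : E}
    (hz : z ∈ annulus E a b) (hv : ‖v‖ ≤ c) : z + v ∈ annulus E (a - c) (b + c) :=
  ⟨by linarith [hz.1, norm_le_add_norm_add z v], by linarith [hz.2, norm_add_le z v]⟩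

theorem annulus_subset_annulus {E : Type*} [NormedAddCommGroup E] {a b a' b' : ℝ}
    (ha : a' ≤ a) (hb : b ≤ b') : annulus E a b ⊆ annulus E a' b' :=
  fun _ hz => ⟨ha.trans hz.1, hz.2.trans hb⟩

theorem exists_eLpNorm_small_translation_le (n : ℕ) :
    ∃ C ≠ ∞, ∀ s : ℝ≥0∞, 1 ≤ s → ∀ Ω : En n → ℝ, Measurable Ω → HomZero Ω →
      ∀ y : En n, ‖y‖ ≤ 1 / 16 →
        eLpNorm (fun z => Ω (z + y) - Ω z) s (volume.restrict (annulus (En n) (1 / 2) 3)) ≤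
          C * emodCont s Ω (128 * ‖y‖) := by
  obtain ⟨C, hC, hCle⟩ := exists_eLpNorm_intermediate_translation_le n
  refine ⟨2 * C, by finiteness, fun s hs Ω hΩ hhom y hy => ?_⟩
  rcases eq_or_ne y 0 with rfl | hy0
  · simp
  obtain ⟨u, hu, hle, hle'⟩ := hCle s hs Ω hΩ hhom y hy0 hy
  set p : En n → En n := fun z => z + (y - u)
  have hsplit : (fun z => Ω (z + y) - Ω z) =
      (fun z => Ω (p z + u) - Ω (p z)) - fun z => Ω (p z + (u - y)) - Ω (p z) := by
    ext z
    simp [p, add_assoc]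
  have hp : ∀ z ∈ annulus (En n) (1 / 2) 3, p z ∈ annulus (En n) (1 / 4) 4 := fun z hz =>
    annulus_subset_annulus (by norm_num) (by norm_num)
      (add_mem_annulus hz (c := 1 / 8) (by linarith [norm_sub_le y u]))
  have hA := (isClosed_annulus (E := En n) (1 / 4) 4).measurableSet
  rw [hsplit, two_mul, add_mul]
  refine (eLpNorm_sub_le (Measurable.aestronglyMeasurable (by fun_prop))
    (Measurable.aestronglyMeasurable (by fun_prop)) hs).trans (add_le_add ?_ ?_)
  · exact (eLpNorm_comp_add_right_le hA hp (f := fun z => Ω (z + u) - Ω z)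
      (Measurable.aestronglyMeasurable (by fun_prop)) s).trans hle
  · exact (eLpNorm_comp_add_right_le hA hp (f := fun z => Ω (z + (u - y)) - Ω z)
      (Measurable.aestronglyMeasurable (by fun_prop)) s).trans hle'

end Translation

section Kernel

variable {n : ℕ} {s : ℝ≥0∞} {Ω : En n → ℝ}

/-- The half-open annulus `R ≤ ‖z‖ < 2R` on which the kernel difference is measured. -/
def shell (n : ℕ) (R : ℝ) : Set (En n) := {z | R ≤ ‖z‖ ∧ ‖z‖ < 2 * R}

theorem measurableSet_shell (n : ℕ) (R : ℝ) : MeasurableSet (shell n R) :=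
  (measurableSet_le measurable_const measurable_norm).inter
    (measurableSet_lt measurable_norm measurable_const)

theorem shell_one_subset_annulus (n : ℕ) : shell n 1 ⊆ annulus (En n) 1 2 := fun z hz =>
  ⟨hz.1, by linarith [hz.2]⟩

theorem exists_eLpNorm_translation_shell_le (n : ℕ) :
    ∃ C ≠ ∞, ∀ s : ℝ≥0∞, 1 ≤ s → ∀ Ω : En n → ℝ, Measurable Ω → HomZero Ω →
      ∀ x : En n, ‖x‖ < 1 / 2 →
        eLpNorm (fun z => Ω (z - x) - Ω z) s (volume.restrict (shell n 1)) ≤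
          C * emodCont s Ω (‖x‖ / 2) := by
  obtain ⟨C, hC, hCle⟩ := exists_eLpNorm_small_translation_le n
  refine ⟨256 * C, by finiteness, fun s hs Ω hΩ hhom x hx => ?_⟩
  set y : En n := (-1 / 256 : ℝ) • x with hy
  have hnorm : ‖y‖ = ‖x‖ / 256 := by
    rw [hy, norm_smul, Real.norm_eq_abs, abs_of_neg (by norm_num)]
    ring
  have hsum : 256 • y = -x := by
    rw [hy, ← Nat.cast_smul_eq_nsmul ℝ, smul_smul]
    norm_num
  have hmem : ∀ k < 256, ∀ z ∈ shell n 1, z + k • y ∈ annulus (En n) (1 / 2) 3 := by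
    intro k hk z hz
    have hk' : (k : ℝ) < 256 := by exact_mod_cast hk
    have hky : ‖k • y‖ ≤ 1 / 2 := by
      refine (norm_nsmul_le ..).trans ?_
      nlinarith [norm_nonneg x]
    exact annulus_subset_annulus (by norm_num) (by norm_num)
      (add_mem_annulus (shell_one_subset_annulus n hz) hky)
  calc eLpNorm (fun z => Ω (z - x) - Ω z) s (volume.restrict (shell n 1))
      = eLpNorm (fun z => Ω (z + 256 • y) - Ω z) s (volume.restrict (shell n 1)) := by
        simp only [hsum, ← sub_eq_add_neg]
    _ ≤ (256 : ℕ) * eLpNorm (fun z => Ω (z + y) - Ω z) s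
          (volume.restrict (annulus (En n) (1 / 2) 3)) :=
        eLpNorm_add_nsmul_sub_le (isClosed_annulus (1 / 2) 3).measurableSet hΩ hs hmem
    _ ≤ (256 : ℕ) * (C * emodCont s Ω (128 * ‖y‖)) := by
        gcongr
        exact hCle s hs Ω hΩ hhom y (by linarith)
    _ = 256 * C * emodCont s Ω (‖x‖ / 2) := by
        rw [hnorm, mul_assoc, Nat.cast_ofNat, mul_div_left_comm, div_eq_mul_inv ‖x‖ 2]
        norm_num

/-- The kernel `Ω(z) |z|^β`, homogeneous of degree `β`; the fractional integral `T_{Ω,α}` has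
`β = α - n`. -/
def homKernel (Ω : En n → ℝ) (β : ℝ) (z : En n) : ℝ := Ω z * ‖z‖ ^ β

theorem homKernel_smul (hΩ : HomZero Ω) (β : ℝ) {R : ℝ} (hR : 0 < R) (z : En n) :
    homKernel Ω β (R • z) = R ^ β * homKernel Ω β z := by
  have hsmul : Ω (R • z) = Ω z := by
    rcases eq_or_ne z 0 with rfl | hz
    · rw [smul_zero]
    · exact hΩ R hR z hz
  rw [homKernel, homKernel, hsmul, norm_smul, Real.norm_of_nonneg hR.le,
    Real.mul_rpow hR.le (norm_nonneg z)]
  ring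

theorem exists_rpow_le_and_lipschitzOnWith (β : ℝ) {a : ℝ} (ha : 0 < a) (b : ℝ) :
    ∃ L : ℝ≥0, (∀ t ∈ Icc a b, t ^ β ≤ L) ∧ LipschitzOnWith L (fun t : ℝ => t ^ β) (Icc a b) := by
  have hsmooth : ContDiffOn ℝ 1 (fun t : ℝ => t ^ β) (Icc a b) :=
    contDiffOn_id.rpow_const_of_ne fun t ht => (ha.trans_le ht.1).ne'
  obtain ⟨K, hK⟩ := hsmooth.exists_lipschitzOnWith one_ne_zero (convex_Icc a b) isCompact_Icc
  obtain ⟨D, hD⟩ := isCompact_Icc.bddAbove_image hsmooth.continuousOn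
  refine ⟨max D.toNNReal K, fun t ht => ?_, hK.weaken (le_max_right _ _)⟩
  exact (hD (mem_image_of_mem _ ht)).trans
    ((Real.le_coe_toNNReal D).trans (NNReal.coe_le_coe.2 (le_max_left _ _)))

theorem memLp_shell (hΩm : Measurable Ω) (hΩ : HomZero Ω) (hΩs : sphereLpNorm s Ω ≠ ∞) :
    MemLp Ω s (volume.restrict (shell n 1)) :=
  memLp_restrict_of_memLp_toSphere volume three_pos
    ((shell_one_subset_annulus n).trans
      (annulus_subset_ball_diff_zero one_pos (by norm_num))) hΩm hΩ.apply_normalize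
    ⟨Measurable.aestronglyMeasurable (by fun_prop), hΩs.lt_top⟩

theorem eLpNorm_homKernel_sub_le (hs : 1 ≤ s) (hΩ : Measurable Ω) {β : ℝ} {L : ℝ≥0}
    (hL : ∀ t ∈ Icc (1 / 2 : ℝ) 3, t ^ β ≤ L)
    (hLip : LipschitzOnWith L (fun t : ℝ => t ^ β) (Icc (1 / 2) 3)) {x : En n}
    (hx : ‖x‖ < 1 / 2) :
    eLpNorm (fun z => homKernel Ω β (z - x) - homKernel Ω β z) s
        (volume.restrict (shell n 1)) ≤
      L * eLpNorm (fun z => Ω (z - x) - Ω z) s (volume.restrict (shell n 1)) +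
        L * ‖x‖ₑ * eLpNorm Ω s (volume.restrict (shell n 1)) := by
  have hsplit : (fun z => homKernel Ω β (z - x) - homKernel Ω β z) =
      (fun z => ‖z - x‖ ^ β * (Ω (z - x) - Ω z)) + fun z => (‖z - x‖ ^ β - ‖z‖ ^ β) * Ω z := by
    ext z
    simp only [homKernel, Pi.add_apply]
    ring
  have hmem (z : En n) (hz : z ∈ shell n 1) : ‖z - x‖ ∈ Icc (1 / 2 : ℝ) 3 :=
    ⟨by linarith [hz.1, norm_sub_norm_le z x], by linarith [hz.2, norm_sub_le z x]⟩
  have hmem' (z : En n) (hz : z ∈ shell n 1) : ‖z‖ ∈ Icc (1 / 2 : ℝ) 3 :=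
    ⟨by linarith [hz.1], by linarith [hz.2]⟩
  rw [hsplit]
  refine (eLpNorm_add_le (Measurable.aestronglyMeasurable (by fun_prop))
    (Measurable.aestronglyMeasurable (by fun_prop)) hs).trans (add_le_add ?_ ?_)
  · rw [← ENNReal.ofReal_coe_nnreal]
    refine eLpNorm_le_mul_eLpNorm_of_ae_le_mul ?_ s
    filter_upwards [ae_restrict_mem (measurableSet_shell n 1)] with z hz
    rw [norm_mul, Real.norm_of_nonneg (by positivity)]
    gcongr
    exact hL _ (hmem z hz)
  · rw [← ENNReal.ofReal_coe_nnreal, ← ofReal_norm, ← ENNReal.ofReal_mul L.coe_nonneg]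
    refine eLpNorm_le_mul_eLpNorm_of_ae_le_mul ?_ s
    filter_upwards [ae_restrict_mem (measurableSet_shell n 1)] with z hz
    rw [norm_mul]
    gcongr
    refine (hLip.norm_sub_le (hmem z hz) (hmem' z hz)).trans ?_
    gcongr
    simpa using abs_norm_sub_norm_le (z - x) z

theorem exists_eLpNorm_homKernel_sub_le (hs : 1 ≤ s) (hΩm : Measurable Ω) (hΩ : HomZero Ω)
    (hΩs : sphereLpNorm s Ω ≠ ∞) (β : ℝ) :
    ∃ C : ℝ≥0, 0 < C ∧ ∀ x : En n, ‖x‖ < 1 / 2 →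
      eLpNorm (fun z => homKernel Ω β (z - x) - homKernel Ω β z) s
        (volume.restrict (shell n 1)) ≤ C * (‖x‖ₑ + emodCont s Ω (‖x‖ / 2)) := by
  obtain ⟨L, hL, hLip⟩ := exists_rpow_le_and_lipschitzOnWith β one_half_pos 3
  obtain ⟨K, hK, hKle⟩ := exists_eLpNorm_translation_shell_le n
  have hN := (memLp_shell hΩm hΩ hΩs).2.ne
  generalize hΩN : eLpNorm Ω s (volume.restrict (shell n 1)) = N at hN
  lift N to ℝ≥0 using hN
  lift K to ℝ≥0 using hK
  refine ⟨L * K + L * N + 1, by positivity, fun x hx => ?_⟩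
  calc _ ≤ L * (K * emodCont s Ω (‖x‖ / 2)) + L * ‖x‖ₑ * N := by
        refine (eLpNorm_homKernel_sub_le hs hΩm hL hLip hx).trans ?_
        rw [hΩN]
        gcongr
        exact hKle s hs Ω hΩm hΩ x hx
    _ = L * N * ‖x‖ₑ + L * K * emodCont s Ω (‖x‖ / 2) := by ring
    _ ≤ (L * K + L * N + 1) * ‖x‖ₑ + (L * K + L * N + 1) * emodCont s Ω (‖x‖ / 2) :=
        add_le_add (mul_le_mul_left (le_add_right le_add_self) _)
          (mul_le_mul_left (le_add_right le_self_add) _)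
    _ = _ := by
        push_cast
        ring

theorem exists_toReal_eLpNorm_homKernel_sub_le (hs : 1 ≤ s) (hΩm : Measurable Ω)
    (hΩ : HomZero Ω) (hΩs : sphereLpNorm s Ω ≠ ∞) (β : ℝ) :
    ∃ C > 0, ∀ x : En n, ‖x‖ < 1 / 2 →
      (eLpNorm (fun z => homKernel Ω β (z - x) - homKernel Ω β z) s
        (volume.restrict (shell n 1))).toReal ≤
          C * (‖x‖ + ∫ δ in (‖x‖ / 2)..‖x‖, modCont s Ω δ / δ) := by
  obtain ⟨C, hC, hCle⟩ := exists_eLpNorm_homKernel_sub_le hs hΩm hΩ hΩs β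
  refine ⟨2 * C, by positivity, fun x hx => ?_⟩
  have hω := emodCont_ne_top hs hΩm hΩs (‖x‖ / 2)
  have hint := modCont_le_two_mul_integral hs hΩm hΩs (a := ‖x‖ / 2) (by positivity)
  rw [mul_div_cancel₀ _ two_ne_zero] at hint
  calc _ ≤ C * (‖x‖ + modCont s Ω (‖x‖ / 2)) := by
        refine (ENNReal.toReal_mono (ENNReal.mul_ne_top ENNReal.coe_ne_top
          (ENNReal.add_ne_top.2 ⟨enorm_ne_top, hω⟩)) (hCle x hx)).trans_eq ?_
        rw [ENNReal.toReal_mul, ENNReal.toReal_add enorm_ne_top hω, toReal_enorm]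
        rfl
    _ ≤ C * (2 * (‖x‖ + ∫ δ in (‖x‖ / 2)..‖x‖, modCont s Ω δ / δ)) := by
        gcongr
        linarith [norm_nonneg x]
    _ = _ := by ring

theorem eLpNorm_restrict_shell_eq (s : ℝ≥0∞) {f : En n → ℝ} (hf : Measurable f) {R : ℝ}
    (hR : 0 < R) :
    eLpNorm f s (volume.restrict (shell n R)) = ENNReal.ofReal (R ^ (n * (s⁻¹).toReal)) *
      eLpNorm (fun z => f (R • z)) s (volume.restrict (shell n 1)) := by
  have hpre : (R • ·) ⁻¹' shell n R = shell n 1 := by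
    ext z
    simp only [shell, mem_preimage, mem_ofPred_eq, norm_smul, Real.norm_of_nonneg hR.le,
      mul_one, le_mul_iff_one_le_right hR, mul_comm (2 : ℝ) R,
      mul_lt_mul_iff_right₀ hR]
  have hRn : 0 < R ^ n := by positivity
  have hvol : volume.restrict (shell n R) =
      ENNReal.ofReal (R ^ n) • (volume.restrict (shell n 1)).map (R • · : En n → En n) := by
    rw [← hpre, ← Measure.restrict_map (measurable_const_smul R) (measurableSet_shell n R),
      Measure.map_addHaar_smul _ hR.ne', finrank_euclideanSpace_fin, Measure.restrict_smul,
      smul_smul, abs_of_pos (by positivity), ← ENNReal.ofReal_mul hRn.le,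
      mul_inv_cancel₀ hRn.ne', ENNReal.ofReal_one, one_smul]
  rw [hvol, eLpNorm_smul_measure_of_ne_zero (by simpa using hRn),
    eLpNorm_map_measure hf.aestronglyMeasurable (measurable_const_smul R).aemeasurable,
    smul_eq_mul, one_div, ENNReal.ofReal_rpow_of_pos hRn, ← Real.rpow_natCast,
    ← Real.rpow_mul hR.le]
  rfl

theorem eLpNorm_homKernel_sub_eq (s : ℝ≥0∞) (hΩm : Measurable Ω) (hΩ : HomZero Ω) (β : ℝ)
    {R : ℝ} (hR : 0 < R) (x : En n) :
    eLpNorm (fun z => homKernel Ω β (z - x) - homKernel Ω β z) s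
        (volume.restrict (shell n R)) =
      ENNReal.ofReal (R ^ (n * (s⁻¹).toReal + β)) *
        eLpNorm (fun z => homKernel Ω β (z - R⁻¹ • x) - homKernel Ω β z) s
          (volume.restrict (shell n 1)) := by
  have hm : Measurable (homKernel Ω β) := by
    unfold homKernel
    fun_prop
  have hsmul : (fun z => homKernel Ω β (R • z - x) - homKernel Ω β (R • z)) =
      R ^ β • fun z => homKernel Ω β (z - R⁻¹ • x) - homKernel Ω β z := by
    ext z
    have hsub : R • z - x = R • (z - R⁻¹ • x) := by rw [smul_sub, smul_inv_smul₀ hR.ne']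
    rw [hsub, homKernel_smul hΩ β hR, homKernel_smul hΩ β hR, Pi.smul_apply, smul_eq_mul,
      mul_sub]
  rw [eLpNorm_restrict_shell_eq s (by fun_prop) hR, hsmul, eLpNorm_const_smul,
    Real.enorm_of_nonneg (by positivity), ← mul_assoc, ← ENNReal.ofReal_mul (by positivity),
    Real.rpow_add hR]

end Kernel

theorem kernel_difference_annulus_estimate_general {n : ℕ} (α : ℝ) {s : ℝ≥0∞} (hs : 1 ≤ s)
    {Ω : En n → ℝ} (hΩm : Measurable Ω) (hΩ : HomZero Ω) (hΩs : sphereLpNorm s Ω ≠ ∞) :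
    ∃ C > 0, ∀ R : ℝ, 0 < R → ∀ x : En n, ‖x‖ < 1 / 2 * R →
      (eLpNorm
          (fun z : En n =>
            Ω (z - x) * ‖z - x‖ ^ (α - (n : ℝ)) - Ω z * ‖z‖ ^ (α - (n : ℝ))) s
          (volume.restrict {z : En n | R ≤ ‖z‖ ∧ ‖z‖ < 2 * R})).toReal
      ≤ C * R ^ ((n : ℝ) * (s⁻¹).toReal - ((n : ℝ) - α)) *
          (‖x‖ / R + ∫ δ in (‖x‖ / (2 * R))..(‖x‖ / R), modCont s Ω δ / δ) := by
  obtain ⟨C, hC, hCle⟩ := exists_toReal_eLpNorm_homKernel_sub_le hs hΩm hΩ hΩs (α - n)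
  refine ⟨C, hC, fun R hR x hx => ?_⟩
  have hnorm : ‖R⁻¹ • x‖ = ‖x‖ / R := by
    rw [norm_smul, norm_inv, Real.norm_of_nonneg hR.le, inv_mul_eq_div]
  have hunit := hCle (R⁻¹ • x) (by rwa [hnorm, div_lt_iff₀ hR])
  rw [hnorm, div_div, mul_comm R 2] at hunit
  have hexp : n * (s⁻¹).toReal - (n - α) = n * (s⁻¹).toReal + (α - n) := by ring
  change (eLpNorm (fun z => homKernel Ω (α - n) (z - x) - homKernel Ω (α - n) z) s
    (volume.restrict (shell n R))).toReal ≤ _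
  rw [eLpNorm_homKernel_sub_eq s hΩm hΩ _ hR, ENNReal.toReal_mul,
    ENNReal.toReal_ofReal (by positivity), hexp, mul_comm C, mul_assoc]
  gcongr

/-- (Ding–Lu kernel smoothness estimate on annuli `R ≤ |z| < 2R`.) -/
theorem kernel_difference_annulus_estimate {n : ℕ} (hn : 2 ≤ n)
    (α : ℝ) (hα0 : 0 < α) (hαn : α < n)
    (s : ℝ≥0∞) (hs1 : 1 < s)
    (Ω : En n → ℝ) (hΩm : Measurable Ω) (hD : DiniCond s 0 Ω) :
    ∃ C > 0, ∃ ϑ : ℝ, ϑ ∈ Ioo (0 : ℝ) (1 / 2) ∧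
      ∀ (R : ℝ), 0 < R → ∀ x : En n, ‖x‖ < ϑ * R →
        (eLpNorm
            (fun z : En n =>
              Ω (z - x) * ‖z - x‖ ^ (α - (n : ℝ)) - Ω z * ‖z‖ ^ (α - (n : ℝ))) s
            (volume.restrict {z : En n | R ≤ ‖z‖ ∧ ‖z‖ < 2 * R})).toReal
        ≤ C * R ^ ((n : ℝ) * (s⁻¹).toReal - ((n : ℝ) - α)) *
            (‖x‖ / R + ∫ δ in (‖x‖ / (2 * R))..(‖x‖ / R), modCont s Ω δ / δ) := by
  obtain ⟨C, hC, hCle⟩ := kernel_difference_annulus_estimate_general α hs1.le hΩm hD.1 hD.2.1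
  exact ⟨C, hC, 1 / 4, by norm_num, fun R hR x hx => hCle R hR x (by linarith)⟩
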